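/- Fix d ≥ 2 and a fraction p/q in lowest terms with q ≥ 2, 1 ≤ p ≤ q−1, gcd(p,q) = 1. For 1 ≤ k ≤ d−1, let N_k be the number of σ_d-rotational sets with rotation number kp/(kq) (equal to p/q after reduction) that are the union of exactly k distinct σ_d-orbits. Then N_k = ∑_{j=1}^{k} (−1)^{k+j} C(k−1, j−1) C(d−2+jq, d−2). -/

import Mathlib

/-- The angle-multiplying map `σ_d : 𝕋 → 𝕋`, where the circle `𝕋 = ℝ/ℤ` is identified with
the set of representatives `[0,1) ⊆ ℝ` (and so ordered by comparing these representatives). -/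
noncomputable def sigmad (d : ℕ) (t : ℝ) : ℝ := Int.fract (d * t)

/-- The orbit of a point of the circle under `σ_d`. -/
def sigmaOrbit (d : ℕ) (t : ℝ) : Set ℝ := {s | ∃ k : ℕ, (sigmad d)^[k] t = s}

/-- `t : ZMod q → ℝ` lists (with indices viewed in `ℤ/qℤ`) the elements
`t 0 < t 1 < ⋯ < t (q-1)` of a `σ_d`-rotational set with rotation number `p/q`. -/
def IsRotational (d q : ℕ) (p : ZMod q) (t : ZMod q → ℝ) : Prop :=
  (∀ i, t i ∈ Set.Ico (0:ℝ) 1) ∧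
  (∀ i j : ZMod q, i.val < j.val → t i < t j) ∧
  p ≠ 0 ∧
  ∀ i, sigmad d (t i) = t (i + p)

/-- `N_k`: the number of `σ_d`-rotational sets with rotation number `kp/(kq)`
(equal to `p/q` after reduction) that are the union of exactly `k` distinct `σ_d`-orbits. -/
noncomputable def countRotSets (d q p k : ℕ) : ℕ :=
  Nat.card {A : Set ℝ //
    (∃ t : ZMod (k * q) → ℝ, Set.range t = A ∧
      IsRotational d (k * q) ((k * p : ℕ) : ZMod (k * q)) t) ∧
    {O : Set ℝ | ∃ x ∈ A, O = sigmaOrbit d x}.ncard = k}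


structure RSol (d n P : ℕ) (T : ℕ → ℝ) (M : ℕ → ℤ) : Prop where
  hT : ∀ i, T (i + n) = T i + 1
  hM : ∀ i, M (i + n) = M i + ((d : ℤ) - 1)
  heq : ∀ i, (d : ℝ) * T i = T (i + P) + M i

theorem periodic_nonneg (d n P : ℕ) (hd : 2 ≤ d) (hn : 0 < n) (g : ℕ → ℝ)
    (hper : Function.Periodic g n) (hg : ∀ i, g (i + P) ≤ d * g i) (i : ℕ) : 0 ≤ g i := by
  obtain ⟨i0, _, h0⟩ := Finset.exists_min_image (Finset.range n) g ⟨0, by simpa using hn⟩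
  have hmin : ∀ j, g i0 ≤ g j := by
    intro j
    rw [← hper.map_mod_nat j]
    exact h0 _ (by simpa using Nat.mod_lt _ hn)
  have h1 := hg i0
  have h2 := hmin (i0 + P)
  have hd' : (2 : ℝ) ≤ d := by exact_mod_cast hd
  have h3 : 0 ≤ g i0 := by
    by_contra hneg
    push Not at hneg
    nlinarith
  exact h3.trans (hmin i)

theorem periodic_zero (d n P : ℕ) (hd : 2 ≤ d) (hn : 0 < n) (g : ℕ → ℝ)
    (hper : Function.Periodic g n) (hg : ∀ i, d * g i = g (i + P)) (i : ℕ) : g i = 0 := by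
  have h1 := periodic_nonneg d n P hd hn g hper (fun i => (hg i).symm.le) i
  have h2 := periodic_nonneg d n P hd hn (fun i => - g i) (fun i => by simp [hper i])
    (fun i => by rw [← hg i]; linarith) i
  linarith

theorem RSol.unique {d n P : ℕ} (hd : 2 ≤ d) (hn : 0 < n) {T T' : ℕ → ℝ} {M : ℕ → ℤ}
    (h : RSol d n P T M) (h' : RSol d n P T' M) : T = T' := by
  funext i
  have := periodic_zero d n P hd hn (fun i => T i - T' i)
    (fun i => by simp only [h.hT, h'.hT]; ring)
    (fun i => by rw [mul_sub, h.heq, h'.heq]; ring) i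
  linarith

theorem RSol.exists {d n P : ℕ} (hd : 2 ≤ d) (hn : 0 < n) {M : ℕ → ℤ}
    (hM : ∀ i, M (i + n) = M i + ((d : ℤ) - 1)) : ∃ T, RSol d n P T M := by
  have : NeZero n := ⟨hn.ne'⟩
  have hn' : (n : ℝ) ≠ 0 := by exact_mod_cast hn.ne'
  let L : (ZMod n → ℝ) →ₗ[ℝ] (ZMod n → ℝ) :=
    { toFun := fun u x => d * u x - u (x + P)
      map_add' := fun u v => by funext x; simp; ring
      map_smul' := fun c u => by funext x; simp; ring }
  have hinj : Function.Injective L := by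
    rw [← LinearMap.ker_eq_bot, LinearMap.ker_eq_bot']
    intro u hu
    funext x
    have := periodic_zero d n P hd hn (fun i => u (i : ZMod n)) (fun i => by simp)
      (fun i => by
        have := congrFun hu (i : ZMod n)
        simp [L] at this
        push_cast
        linarith) x.val
    simpa using this
  have hsurj := LinearMap.injective_iff_surjective.mp hinj
  let w : ℕ → ℝ := fun i => M i - ((d : ℝ) - 1) * i / n + P / n
  have hw : Function.Periodic w n := by
    intro i
    simp only [w, hM]
    push_cast
    field_simp
    ring
  obtain ⟨u, hu⟩ := hsurj (fun x => w x.val)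
  refine ⟨fun i => (i : ℝ) / n + u (i : ZMod n), ?_, hM, ?_⟩
  · intro i
    simp
    field_simp
    ring
  · intro i
    have := congrFun hu (i : ZMod n)
    simp only [L, LinearMap.coe_mk, AddHom.coe_mk, ZMod.val_natCast, hw.map_mod_nat] at this
    simp only [w] at this
    push_cast
    have e : (d : ℝ) * u i = u (i + P) + (M i - ((d : ℝ) - 1) * i / n + P / n) := by linarith
    rw [mul_add, e]
    field_simp
    ring

theorem RSol.strictMono {d n P : ℕ} (hd : 2 ≤ d) (hn : 0 < n) {T : ℕ → ℝ} {M : ℕ → ℤ}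
    (h : RSol d n P T M) (hmono : ∀ i, M i ≤ M (i + 1))
    (hst : ∀ i, ∃ j, M (i + j * P) < M (i + j * P + 1)) : StrictMono T := by
  have hmono' : ∀ i, (M i : ℝ) ≤ M (i + 1) := fun i => by exact_mod_cast hmono i
  have key : ∀ i, (d : ℝ) * (T (i + 1) - T i) =
      (T (i + P + 1) - T (i + P)) + (M (i + 1) - M i) := by
    intro i
    rw [mul_sub, h.heq, h.heq, show i + 1 + P = i + P + 1 by ring]
    ring
  have hnn := periodic_nonneg d n P hd hn (fun i => T (i + 1) - T i)
    (fun i => by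
      simp only
      rw [show i + n + 1 = i + 1 + n by ring, h.hT, h.hT]; ring)
    (fun i => by have := key i; have := hmono' i; linarith)
  refine strictMono_nat_of_lt_succ fun i => ?_
  by_contra hcon
  have h0 : T (i + 1) - T i = 0 := le_antisymm (by linarith) (hnn i)
  have hall : ∀ j, T (i + j * P + 1) - T (i + j * P) = 0 := by
    intro j
    induction j with
    | zero => simpa using h0
    | succ j ih =>
      have h1 := key (i + j * P)
      rw [ih] at h1
      have h2 := hmono' (i + j * P)
      have h3 := hnn (i + j * P + P)
      rw [show i + (j + 1) * P = i + j * P + P by ring]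
      linarith
  obtain ⟨j, hj⟩ := hst i
  have h1 := key (i + j * P)
  rw [hall j] at h1
  have h3 := hnn (i + j * P + P)
  have h4 : (M (i + j * P) : ℝ) < M (i + j * P + 1) := by exact_mod_cast hj
  linarith

theorem RSol.mono_of_strictMono {d n P : ℕ} (hd : 2 ≤ d) (hn : 2 ≤ n) {T : ℕ → ℝ} {M : ℕ → ℤ}
    (h : RSol d n P T M) (hT : StrictMono T) : (∀ i, M i ≤ M (i + 1)) ∧
    (∀ i, ∃ j, M (i + j * P) < M (i + j * P + 1)) := by
  have key : ∀ i, (d : ℝ) * (T (i + 1) - T i) =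
      (T (i + P + 1) - T (i + P)) + (M (i + 1) - M i) := by
    intro i
    rw [mul_sub, h.heq, h.heq, show i + 1 + P = i + P + 1 by ring]
    ring
  have hd' : (2 : ℝ) ≤ d := by exact_mod_cast hd
  have hpos : ∀ i, 0 < T (i + 1) - T i := fun i => sub_pos.2 (hT (Nat.lt_succ_self i))
  have hm : ∀ i, M i ≤ M (i + 1) := by
    intro i
    have h1 : T (i + P + 1) < T (i + P + n) := hT (by omega)
    rw [h.hT] at h1
    have h2 := key i
    have h3 := hpos i
    have h4 : ((M i : ℝ)) < M (i + 1) + 1 := by nlinarith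
    have h5 : M i < M (i + 1) + 1 := by exact_mod_cast h4
    omega
  refine ⟨hm, fun i => ?_⟩
  by_contra hcon
  push Not at hcon
  have hall : ∀ j, T (i + j * P + 1) - T (i + j * P) = (d : ℝ) ^ j * (T (i + 1) - T i) := by
    intro j
    induction j with
    | zero => simp
    | succ j ih =>
      have h1 := key (i + j * P)
      have h2 : (M (i + j * P) : ℝ) = M (i + j * P + 1) := by
        exact_mod_cast le_antisymm (hm _) (hcon j)
      rw [ih] at h1
      rw [show i + (j + 1) * P = i + j * P + P by ring, pow_succ]
      linarith
  have hper : Function.Periodic (fun i => T (i + 1) - T i) n := by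
    intro i
    simp only
    rw [show i + n + 1 = i + 1 + n by ring, h.hT, h.hT]; ring
  have h1 := hall n
  have h2 : T (i + n * P + 1) - T (i + n * P) = T (i + 1) - T i := by
    have := hper.nat_mul P i
    rw [mul_comm n P]
    simpa using this
  rw [h2] at h1
  have h3 : (1 : ℝ) < (d : ℝ) ^ n := one_lt_pow₀ (by linarith) (by omega)
  have h4 := hpos i
  nlinarith

theorem RSol.bounds {d n P : ℕ} (hd : 2 ≤ d) (hn : 2 ≤ n) (hP0 : 0 < P) (hPn : P < n)
    {T : ℕ → ℝ} {M : ℕ → ℤ}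
    (h : RSol d n P T M) (hT : StrictMono T) :
    (0 ≤ T 0 ∧ T (n - 1) < 1) ↔ (0 ≤ M 0 ∧ M (n - 1) ≤ (d : ℤ) - 2) := by
  have hd' : (2 : ℝ) ≤ d := by exact_mod_cast hd
  have e0 := h.heq 0
  have e1 := h.heq (n - 1)
  rw [zero_add] at e0
  have a1 : T 0 < T P := hT hP0
  have a2 : T P ≤ T (n - 1) := hT.monotone (by omega)
  have a3 : T (0 + n) ≤ T (n - 1 + P) := hT.monotone (by omega)
  have a4 : T (n - 1 + P) < T (n - 1 + n) := hT (by omega)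
  rw [h.hT] at a3 a4
  constructor
  · rintro ⟨h0, h1⟩
    constructor
    · have : (-1 : ℝ) < M 0 := by nlinarith
      have : (-1 : ℤ) < M 0 := by exact_mod_cast this
      omega
    · have : (M (n - 1) : ℝ) < d - 1 := by nlinarith
      have : M (n - 1) < (d : ℤ) - 1 := by exact_mod_cast this
      omega
  · rintro ⟨h0, h1⟩
    have h0' : (0 : ℝ) ≤ M 0 := by exact_mod_cast h0
    have h1' : (M (n - 1) : ℝ) ≤ d - 2 := by exact_mod_cast h1
    constructor <;> nlinarith

/-- digits attached to a composition -/
def Mof (d n : ℕ) (f : ℕ → ℕ) (i : ℕ) : ℤ :=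
  ((∑ j ∈ Finset.range (i % n + 1), f j : ℕ) : ℤ) + ((d : ℤ) - 1) * ((i / n : ℕ) : ℤ)

theorem Mof_period (d n : ℕ) (hn : 0 < n) (f : ℕ → ℕ) (i : ℕ) :
    Mof d n f (i + n) = Mof d n f i + ((d : ℤ) - 1) := by
  unfold Mof
  rw [Nat.add_mod_right, Nat.add_div_right _ hn]
  push_cast
  ring

theorem Mof_lt (d n : ℕ) (f : ℕ → ℕ) {i : ℕ} (hi : i < n) :
    Mof d n f i = ((∑ j ∈ Finset.range (i + 1), f j : ℕ) : ℤ) := by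
  unfold Mof
  rw [Nat.mod_eq_of_lt hi, Nat.div_eq_of_lt hi]
  simp

theorem Mof_succ (d n : ℕ) (f : ℕ → ℕ) {i : ℕ} (hi : i + 1 < n) :
    Mof d n f (i + 1) = Mof d n f i + f (i + 1) := by
  rw [Mof_lt d n f hi, Mof_lt d n f (by omega), Finset.sum_range_succ _ (i + 1)]
  push_cast
  ring

theorem Mof_last (d n : ℕ) (hd : 2 ≤ d) (hn : 0 < n) (f : ℕ → ℕ)
    (hf : ∑ j ∈ Finset.range (n + 1), f j = d - 2) :
    Mof d n f (n - 1) = (d : ℤ) - 2 - f n := by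
  rw [Mof_lt d n f (by omega), show n - 1 + 1 = n by omega]
  rw [Finset.sum_range_succ] at hf
  push_cast
  have : ((∑ j ∈ Finset.range n, f j : ℕ) : ℤ) + f n = d - 2 := by omega
  push_cast at this
  linarith

/-- increments are periodic -/
theorem incr_mod {d n : ℕ} {M : ℕ → ℤ} (hM : ∀ i, M (i + n) = M i + ((d : ℤ) - 1))
    {i j : ℕ} (hij : i ≡ j [MOD n]) : M (i + 1) - M i = M (j + 1) - M j := by
  have hper : Function.Periodic (fun i => M (i + 1) - M i) n := by
    intro i
    simp only
    rw [show i + n + 1 = i + 1 + n by ring, hM, hM]; ring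
  have h1 := hper.map_mod_nat i
  have h2 := hper.map_mod_nat j
  rw [hij] at h1
  rw [← h1, h2]

theorem Mof_mono (d n : ℕ) (hd : 2 ≤ d) (hn : 0 < n) (f : ℕ → ℕ)
    (hf : ∑ j ∈ Finset.range (n + 1), f j = d - 2) (i : ℕ) :
    Mof d n f i ≤ Mof d n f (i + 1) := by
  have h := incr_mod (Mof_period d n hn f) (Nat.mod_modEq i n)
  have hlt := Nat.mod_lt i hn
  by_cases hc : i % n + 1 < n
  · have := Mof_succ d n f hc
    omega
  · have e : i % n = n - 1 := by omega
    rw [e, show n - 1 + 1 = 0 + n by omega, Mof_period d n hn, Mof_last d n hd hn f hf,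
      Mof_lt d n f hn] at h
    omega

theorem card_piAntidiag_choose (s : Finset ℕ) (m : ℕ) :
    (Finset.piAntidiag s m).card = (s.card + m - 1).choose m := by
  rw [← Finset.card_finsuppAntidiag_nat_eq_choose]
  simp [Finset.finsuppAntidiag]

theorem card_class (k q r : ℕ) (hr : 1 ≤ r) (hrk : r < k) :
    ((Finset.range (k * q + 1)).filter (fun i => i % k = r)).card = q := by
  have : (Finset.range (k * q + 1)).filter (fun i => i % k = r) =
      (Finset.range q).image (fun j => r + k * j) := by
    ext i
    simp only [Finset.mem_filter, Finset.mem_range, Finset.mem_image]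
    constructor
    · rintro ⟨h1, h2⟩
      have e := Nat.mod_add_div i k
      refine ⟨i / k, ?_, by omega⟩
      have : k * (i / k) < k * q := by omega
      exact Nat.lt_of_mul_lt_mul_left this
    · rintro ⟨j, hj, rfl⟩
      refine ⟨?_, by rw [Nat.add_mul_mod_self_left, Nat.mod_eq_of_lt hrk]⟩
      have : k * (j + 1) ≤ k * q := Nat.mul_le_mul_left k hj
      rw [mul_add] at this
      omega
  rw [this, Finset.card_image_of_injective, Finset.card_range]
  intro a b hab
  have : k * a = k * b := by simpa using hab
  exact Nat.eq_of_mul_eq_mul_left (by omega) this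

theorem card_avoid (k q : ℕ) (R : Finset ℕ) (hR : R ⊆ Finset.Ico 1 k) :
    ((Finset.range (k * q + 1)).filter (fun i => i % k ∉ R)).card + R.card * q = k * q + 1 := by
  have h1 := Finset.card_filter_add_card_filter_not (s := Finset.range (k * q + 1))
    (fun i => i % k ∈ R)
  have h2 : ((Finset.range (k * q + 1)).filter (fun i => i % k ∈ R)).card = R.card * q := by
    rw [Finset.card_eq_sum_card_fiberwise (f := fun i => i % k) (t := R)
      (fun i hi => by simpa using (Finset.mem_filter.1 hi).2)]
    rw [Finset.sum_const_nat (m := q)]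
    intro r hr
    have := Finset.mem_Ico.1 (hR hr)
    rw [Finset.filter_filter]
    refine Eq.trans ?_ (card_class k q r this.1 this.2)
    congr 1
    ext i
    simp only [Finset.mem_filter]
    constructor
    · rintro ⟨a, b, c⟩; exact ⟨a, c⟩
    · rintro ⟨a, c⟩; exact ⟨a, c ▸ hr, c⟩
  rw [Finset.card_range] at h1
  omega

open Classical in
/-- the compositions being counted -/
noncomputable def FF (d k q : ℕ) : Finset (ℕ → ℕ) :=
  (Finset.piAntidiag (Finset.range (k * q + 1)) (d - 2)).filter
    (fun f => ∀ r ∈ Finset.Ico 1 k, ∃ i ∈ Finset.range (k * q + 1), i % k = r ∧ f i ≠ 0)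

theorem card_FF (d k q : ℕ) (hk : 1 ≤ k) :
    ((FF d k q).card : ℤ) = ∑ j ∈ Finset.Icc 1 k,
          (-1 : ℤ) ^ (k + j) * ((k - 1).choose (j - 1) : ℤ) *
            ((d - 2 + j * q).choose (d - 2) : ℤ) := by
  classical
  let V : (ℕ → ℕ) → ℕ → Prop := fun f r => ∀ i ∈ Finset.range (k * q + 1), i % k = r → f i = 0
  have step1 : ((FF d k q).card : ℤ) =
      ∑ f ∈ Finset.piAntidiag (Finset.range (k * q + 1)) (d - 2),
        ∏ r ∈ Finset.Ico 1 k, ((1 : ℤ) - if V f r then 1 else 0) := by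
    unfold FF
    rw [Finset.card_filter]
    push_cast
    refine Finset.sum_congr rfl fun f _ => ?_
    have : ∀ r, ((1 : ℤ) - if V f r then 1 else 0) = if ¬ V f r then 1 else 0 := by
      intro r; split_ifs <;> simp_all
    simp_rw [this]
    rw [Finset.prod_ite_zero]
    simp only [V, Finset.prod_const_one]
    congr 1
    simp
  rw [step1]
  simp_rw [Finset.prod_sub]
  rw [Finset.sum_comm]
  have step2 : ∀ R ∈ (Finset.Ico 1 k).powerset,
      (∑ f ∈ Finset.piAntidiag (Finset.range (k * q + 1)) (d - 2),
        (-1 : ℤ) ^ R.card * (∏ i ∈ Finset.Ico 1 k \ R, (1 : ℤ)) *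
          ∏ r ∈ R, (if V f r then (1 : ℤ) else 0)) =
      (-1 : ℤ) ^ R.card * ((d - 2 + (k - R.card) * q).choose (d - 2) : ℤ) := by
    intro R hR
    rw [Finset.mem_powerset] at hR
    rw [Finset.prod_const_one, mul_one, ← Finset.mul_sum]
    congr 1
    have e2 : ∀ f, ∏ r ∈ R, (if V f r then (1 : ℤ) else 0) =
        if (∀ r ∈ R, V f r) then 1 else 0 := by
      intro f
      rw [Finset.prod_ite_zero, Finset.prod_const_one]
    simp_rw [e2]
    have e : (Finset.piAntidiag (Finset.range (k * q + 1)) (d - 2)).filter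
        (fun f => ∀ r ∈ R, V f r) =
        Finset.piAntidiag ((Finset.range (k * q + 1)).filter (fun i => i % k ∉ R)) (d - 2) := by
      ext f
      simp only [Finset.mem_filter, Finset.mem_piAntidiag, V]
      constructor
      · rintro ⟨⟨h1, h2⟩, h3⟩
        refine ⟨?_, fun i hi => ⟨h2 i hi, fun hR' => hi (h3 _ hR' i (h2 i hi) rfl)⟩⟩
        rw [← h1]
        refine Finset.sum_subset (Finset.filter_subset _ _) fun i hi hi' => ?_
        by_contra hne
        exact hi' (Finset.mem_filter.2 ⟨hi, fun hR' => hne (h3 _ hR' i hi rfl)⟩)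
      · rintro ⟨h1, h2⟩
        refine ⟨⟨?_, fun i hi => (h2 i hi).1⟩, ?_⟩
        · rw [← h1]
          symm
          refine Finset.sum_subset (Finset.filter_subset _ _) fun i hi hi' => ?_
          by_contra hne
          exact hi' (Finset.mem_filter.2 (h2 i hne))
        · intro r hr i hi hir
          by_contra hne
          exact (h2 i hne).2 (hir ▸ hr)
    rw [Finset.sum_boole, e, card_piAntidiag_choose]
    have hc := card_avoid k q R hR
    have hc2 := Finset.card_le_card hR
    rw [Nat.card_Ico] at hc2
    have : k * q = (k - R.card) * q + R.card * q := by
      rw [← add_mul, Nat.sub_add_cancel (by omega)]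
    congr 2
    omega
  rw [Finset.sum_congr rfl step2]
  rw [Finset.sum_powerset_apply_card
    (fun m => (-1 : ℤ) ^ m * ((d - 2 + (k - m) * q).choose (d - 2) : ℤ))]
  rw [Nat.card_Ico, Nat.sub_add_cancel hk]
  refine Finset.sum_bij' (fun m _ => k - m) (fun j _ => k - j) ?_ ?_ ?_ ?_ ?_
  · intro m hm; simp at hm ⊢; omega
  · intro m hm; simp at hm ⊢; omega
  · intro m hm; simp at hm ⊢; omega
  · intro m hm; simp at hm ⊢; omega
  · intro m hm
    simp only [Finset.mem_range] at hm
    rw [show k - m - 1 = (k - 1) - m by omega, Nat.choose_symm (by omega : m ≤ k - 1)]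
    have : (-1 : ℤ) ^ (k + (k - m)) = (-1) ^ m := by
      rw [← Nat.sub_add_cancel (by omega : m ≤ k), Nat.add_sub_cancel,
        show (k - m + m + (k - m)) = 2 * (k - m) + m by ring, pow_add, pow_mul]
      simp
    rw [this, nsmul_eq_mul]
    ring

theorem mem_FF {d k q : ℕ} {f : ℕ → ℕ} : f ∈ FF d k q ↔
    f ∈ Finset.piAntidiag (Finset.range (k * q + 1)) (d - 2) ∧
    ∀ r ∈ Finset.Ico 1 k, ∃ i ∈ Finset.range (k * q + 1), i % k = r ∧ f i ≠ 0 := by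
  unfold FF
  exact @Finset.mem_filter _ _ (_) _ _

theorem reach_mod {k q p : ℕ} (hq : 2 ≤ q) (hpq : Nat.gcd p q = 1) {i s : ℕ}
    (h : i ≡ s [MOD k]) : ∃ j, i + j * (k * p) ≡ s [MOD (k * q)] := by
  obtain ⟨m, hm⟩ := Nat.exists_mul_mod_eq_one_of_coprime (hpq : Nat.Coprime p q) (by omega)
  obtain ⟨z, hz⟩ := (Nat.modEq_iff_dvd.1 h)
  refine ⟨((m : ℤ) * z % q).toNat, ?_⟩
  rw [Nat.modEq_iff_dvd]
  have hqz : (q : ℤ) ≠ 0 := by positivity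
  have h0 : (((m : ℤ) * z % q).toNat : ℤ) = (m : ℤ) * z % q :=
    Int.toNat_of_nonneg (Int.emod_nonneg _ hqz)
  push_cast
  rw [h0]
  have h1 : (q : ℤ) * ((m : ℤ) * z / q) + (m : ℤ) * z % q = m * z := Int.mul_ediv_add_emod _ _
  have h2 : ((p * m % q : ℕ) : ℤ) + q * ((p * m / q : ℕ) : ℤ) = p * m := by
    exact_mod_cast Nat.mod_add_div (p * m) q
  rw [hm.2] at h2
  push_cast at h2
  refine ⟨((m : ℤ) * z / q) * p - ((p : ℤ) * m / q) * z, ?_⟩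
  have e : (s : ℤ) = i + k * z := by linarith
  have e2 : (m : ℤ) * z % q = m * z - q * ((m : ℤ) * z / q) := by linarith
  rw [e, e2]
  linear_combination (k : ℤ) * z * h2

theorem strict_iff {d k q p : ℕ} (hd : 2 ≤ d) (hk : 1 ≤ k) (hq : 2 ≤ q)
    (hpq : Nat.gcd p q = 1) (f : ℕ → ℕ)
    (hf : ∑ j ∈ Finset.range (k * q + 1), f j = d - 2) :
    (∀ i, ∃ j, Mof d (k * q) f (i + j * (k * p)) < Mof d (k * q) f (i + j * (k * p) + 1)) ↔
    (∀ r ∈ Finset.Ico 1 k, ∃ i ∈ Finset.range (k * q + 1), i % k = r ∧ f i ≠ 0) := by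
  have hn : 0 < k * q := by positivity
  have hkn : k ≤ k * q := Nat.le_mul_of_pos_right k (by omega)
  constructor
  · intro h r hr
    rw [Finset.mem_Ico] at hr
    obtain ⟨j, hj⟩ := h (r - 1)
    have hinc := incr_mod (Mof_period d (k * q) hn f)
      (Nat.mod_modEq (r - 1 + j * (k * p)) (k * q))
    have hlt := Nat.mod_lt (r - 1 + j * (k * p)) hn
    set s := (r - 1 + j * (k * p)) % (k * q) with hs
    have hsk : s % k = r - 1 := by
      rw [hs, Nat.mod_mul_right_mod, show j * (k * p) = k * (j * p) by ring,
        Nat.add_mul_mod_self_left, Nat.mod_eq_of_lt (by omega)]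
    have hs1 : (s + 1) % k = r := by
      rw [Nat.add_mod, hsk]
      rcases Nat.lt_or_ge 1 k with h1 | h1
      · rw [Nat.mod_eq_of_lt h1, Nat.sub_add_cancel hr.1, Nat.mod_eq_of_lt hr.2]
      · omega
    have hne : s + 1 < k * q := by
      rcases Nat.lt_or_ge (s + 1) (k * q) with h1 | h1
      · exact h1
      · have : s + 1 = k * q := by omega
        rw [this, Nat.mul_mod_right] at hs1
        omega
    refine ⟨s + 1, Finset.mem_range.2 (by omega), hs1, ?_⟩
    have := Mof_succ d (k * q) f hne
    omega
  · intro h i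
    have key : ∃ s, i ≡ s [MOD k] ∧ Mof d (k * q) f s < Mof d (k * q) f (s + 1) := by
      by_cases hr : (i + 1) % k = 0
      · refine ⟨k * q - 1, ?_, ?_⟩
        · have : i + 1 ≡ (k * q - 1) + 1 [MOD k] := by
            rw [Nat.sub_add_cancel hn]
            unfold Nat.ModEq
            rw [hr, Nat.mul_mod_right]
          exact Nat.ModEq.add_right_cancel' 1 this
        · have := Mof_last d (k * q) hd hn f hf
          have h2 := Mof_period d (k * q) hn f 0
          rw [Mof_lt d _ f hn] at h2
          rw [show k * q - 1 + 1 = 0 + k * q by omega]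
          omega
      · obtain ⟨i', hi', hm, hne⟩ := h ((i + 1) % k)
          (Finset.mem_Ico.2 ⟨by omega, Nat.mod_lt _ (by omega)⟩)
        rw [Finset.mem_range] at hi'
        have h0 : i' ≠ 0 := by rintro rfl; rw [Nat.zero_mod] at hm; omega
        have h1 : i' ≠ k * q := by rintro rfl; rw [Nat.mul_mod_right] at hm; omega
        refine ⟨i' - 1, ?_, ?_⟩
        · have : i + 1 ≡ (i' - 1) + 1 [MOD k] := by
            rw [Nat.sub_add_cancel (by omega)]
            exact hm.symm
          exact Nat.ModEq.add_right_cancel' 1 this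
        · have := Mof_succ d (k * q) f (i := i' - 1) (by omega)
          rw [Nat.sub_add_cancel (by omega)] at this ⊢
          omega
    obtain ⟨s, hs, hlt⟩ := key
    obtain ⟨j, hj⟩ := reach_mod hq hpq hs
    refine ⟨j, ?_⟩
    have := incr_mod (Mof_period d (k * q) hn f) hj
    omega

theorem exists_Mof {d n : ℕ} (hd : 2 ≤ d) (hn : 0 < n) {M : ℕ → ℤ}
    (hM : ∀ i, M (i + n) = M i + ((d : ℤ) - 1)) (hmono : ∀ i, M i ≤ M (i + 1))
    (h0 : 0 ≤ M 0) (h1 : M (n - 1) ≤ (d : ℤ) - 2) :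
    ∃ f ∈ Finset.piAntidiag (Finset.range (n + 1)) (d - 2), Mof d n f = M := by
  let f : ℕ → ℕ := fun i => if i = 0 then (M 0).toNat else if i < n then (M i - M (i - 1)).toNat
    else if i = n then ((d : ℤ) - 2 - M (n - 1)).toNat else 0
  have hsum : ∀ i, i < n → ((∑ j ∈ Finset.range (i + 1), f j : ℕ) : ℤ) = M i := by
    intro i
    induction i with
    | zero => intro _; simp [f, h0]
    | succ i ih =>
      intro hi
      rw [Finset.sum_range_succ]
      have h3 := ih (by omega)
      have h4 := hmono i
      have h5 : f (i + 1) = (M (i + 1) - M i).toNat := by simp [f, hi]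
      rw [h5]
      omega
  refine ⟨f, ?_, ?_⟩
  · rw [Finset.mem_piAntidiag]
    constructor
    · refine (Finset.sum_range_succ f n).trans ?_
      have h3 := hsum (n - 1) (by omega)
      rw [Nat.sub_add_cancel hn] at h3
      have h5 : f n = ((d : ℤ) - 2 - M (n - 1)).toNat := by simp [f, hn.ne']
      rw [h5]
      omega
    · intro i hi
      rw [Finset.mem_range]
      by_contra hc
      apply hi
      simp only [f]
      rw [if_neg (by omega), if_neg (by omega), if_neg (by omega)]
  · funext i
    have hper : ∀ a b, M (a + n * b) = M a + ((d : ℤ) - 1) * (b : ℤ) := by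
      intro a b
      induction b with
      | zero => simp
      | succ b ih =>
        rw [mul_add, mul_one, ← add_assoc, hM, ih]
        push_cast
        ring
    have := hper (i % n) (i / n)
    rw [Nat.mod_add_div] at this
    unfold Mof
    rw [hsum _ (Nat.mod_lt _ hn), this]

theorem Mof_inj {d n : ℕ} (hn : 0 < n) {f g : ℕ → ℕ}
    (hf : f ∈ Finset.piAntidiag (Finset.range (n + 1)) (d - 2))
    (hg : g ∈ Finset.piAntidiag (Finset.range (n + 1)) (d - 2))
    (h : Mof d n f = Mof d n g) : f = g := by
  rw [Finset.mem_piAntidiag] at hf hg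
  have hs : ∀ i, i < n →
      ∑ j ∈ Finset.range (i + 1), f j = ∑ j ∈ Finset.range (i + 1), g j := by
    intro i hi
    have := congrFun h i
    rw [Mof_lt d n f hi, Mof_lt d n g hi] at this
    exact_mod_cast this
  have hs' : ∀ i, i ≤ n + 1 → ∑ j ∈ Finset.range i, f j = ∑ j ∈ Finset.range i, g j := by
    intro i hi
    rcases Nat.eq_zero_or_pos i with rfl | hi0
    · simp
    rcases Nat.lt_or_ge n i with h1 | h1
    · rw [show i = n + 1 by omega, hf.1, hg.1]
    · have := hs (i - 1) (by omega)
      rwa [Nat.sub_add_cancel hi0] at this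
  funext i
  by_cases hi : i < n + 1
  · have h1 := hs' i (by omega)
    have h2 := hs' (i + 1) (by omega)
    rw [Finset.sum_range_succ, Finset.sum_range_succ] at h2
    omega
  · have h1 : f i = 0 := by
      by_contra hc
      exact hi (by simpa using hf.2 i hc)
    have h2 : g i = 0 := by
      by_contra hc
      exact hi (by simpa using hg.2 i hc)
    rw [h1, h2]

theorem orbits_ncard {d k q p : ℕ} (hk : 1 ≤ k) (hq : 2 ≤ q) (hpq : Nat.gcd p q = 1)
    {t : ZMod (k * q) → ℝ} (ht : IsRotational d (k * q) ((k * p : ℕ) : ZMod (k * q)) t) :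
    {O : Set ℝ | ∃ x ∈ Set.range t, O = sigmaOrbit d x}.ncard = k := by
  have hn : 0 < k * q := by positivity
  have : NeZero (k * q) := ⟨hn.ne'⟩
  have hkn : k ≤ k * q := Nat.le_mul_of_pos_right k (by omega)
  obtain ⟨h1, h2, h3, h4⟩ := ht
  have hinj : Function.Injective t := by
    intro x y hxy
    rcases Nat.lt_trichotomy x.val y.val with h | h | h
    · exact absurd hxy (h2 _ _ h).ne
    · exact ZMod.val_injective _ h
    · exact absurd hxy (h2 _ _ h).ne'
  have hit : ∀ j i : ℕ, (sigmad d)^[j] (t (i : ZMod (k * q))) =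
      t ((i + j * (k * p) : ℕ) : ZMod (k * q)) := by
    intro j
    induction j with
    | zero => intro i; simp
    | succ j ih =>
      intro i
      rw [Function.iterate_succ_apply', ih, h4]
      congr 1
      push_cast
      ring
  have hsub : ∀ i s : ℕ, i ≡ s [MOD k] → sigmaOrbit d (t (s : ZMod (k * q))) ⊆
      sigmaOrbit d (t (i : ZMod (k * q))) := by
    rintro i s his _ ⟨j, rfl⟩
    obtain ⟨j', hj'⟩ := reach_mod hq hpq his
    refine ⟨j' + j, ?_⟩
    rw [hit, hit]
    congr 1
    rw [ZMod.natCast_eq_natCast_iff]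
    have := hj'.add_right (j * (k * p))
    convert this using 1
    ring
  have hset : {O : Set ℝ | ∃ x ∈ Set.range t, O = sigmaOrbit d x} =
      (fun r : ℕ => sigmaOrbit d (t (r : ZMod (k * q)))) '' (Finset.range k : Set ℕ) := by
    ext O
    simp only [Set.mem_ofPred_eq, Set.mem_image]
    constructor
    · rintro ⟨_, ⟨x, rfl⟩, rfl⟩
      refine ⟨x.val % k, by simpa using Nat.mod_lt _ (by omega), ?_⟩
      have hx : x = ((x.val : ℕ) : ZMod (k * q)) := by simp
      conv_rhs => rw [hx]
      exact Set.Subset.antisymm (hsub _ _ (Nat.mod_modEq _ _).symm) (hsub _ _ (Nat.mod_modEq _ _))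
    · rintro ⟨r, _, rfl⟩
      exact ⟨_, ⟨_, rfl⟩, rfl⟩
  rw [hset, Set.InjOn.ncard_image, Set.ncard_coe_finset, Finset.card_range]
  intro r hr r' hr' hO
  simp only [Finset.coe_range, Set.mem_Iio] at hr hr'
  have hmem : t (r' : ZMod (k * q)) ∈ sigmaOrbit d (t (r : ZMod (k * q))) := by
    rw [show sigmaOrbit d (t (r : ZMod (k * q))) = sigmaOrbit d (t (r' : ZMod (k * q))) from hO]
    exact ⟨0, rfl⟩
  obtain ⟨j, hj⟩ := hmem
  rw [hit] at hj
  have := (ZMod.natCast_eq_natCast_iff _ _ _).1 (hinj hj)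
  have h5 := this.of_mul_right q
  unfold Nat.ModEq at h5
  rw [show j * (k * p) = k * (j * p) by ring, Nat.add_mul_mod_self_left, Nat.mod_eq_of_lt hr,
    Nat.mod_eq_of_lt hr'] at h5
  exact h5

theorem rot_iff {d n P : ℕ} (hn : 2 ≤ n) (hP0 : 0 < P) (hPn : P < n) (A : Set ℝ) :
    (∃ t : ZMod n → ℝ, Set.range t = A ∧ IsRotational d n ((P : ℕ) : ZMod n) t) ↔
    ∃ T M, RSol d n P T M ∧ StrictMono T ∧ (0 ≤ T 0 ∧ T (n - 1) < 1) ∧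
      A = T '' Set.Iio n := by
  have hn0 : 0 < n := by omega
  have : NeZero n := ⟨hn0.ne'⟩
  constructor
  · rintro ⟨t, rfl, h1, h2, h3, h4⟩
    refine ⟨fun i => t (i : ZMod n) + ((i / n : ℕ) : ℝ),
      fun i => ⌊(d : ℝ) * t (i : ZMod n)⌋ + (d : ℤ) * ((i / n : ℕ) : ℤ) -
        (((i + P) / n : ℕ) : ℤ), ⟨?_, ?_, ?_⟩, ?_, ⟨?_, ?_⟩, ?_⟩
    · intro i
      rw [Nat.add_div_right _ hn0]
      simp
      ring
    · intro i
      rw [Nat.add_div_right _ hn0, show i + n + P = i + P + n by ring, Nat.add_div_right _ hn0]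
      simp
      ring
    · intro i
      have := h4 (i : ZMod n)
      unfold sigmad Int.fract at this
      simp only [Int.cast_sub, Int.cast_add, Int.cast_mul, Int.cast_natCast, Nat.cast_add]
      rw [← this]
      ring
    · refine strictMono_nat_of_lt_succ fun i => ?_
      have e1 := Nat.mod_add_div i n
      have hlt := Nat.mod_lt i hn0
      by_cases hc : i % n + 1 < n
      · have hd1 : (i + 1) / n = i / n := by
          conv_lhs => rw [← e1]
          rw [show i % n + n * (i / n) + 1 = (i % n + 1) + n * (i / n) by ring,
            Nat.add_mul_div_left _ _ hn0, Nat.div_eq_of_lt hc, zero_add]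
        have hm1 : (i + 1) % n = i % n + 1 := by
          conv_lhs => rw [← e1]
          rw [show i % n + n * (i / n) + 1 = (i % n + 1) + n * (i / n) by ring,
            Nat.add_mul_mod_self_left, Nat.mod_eq_of_lt hc]
        rw [hd1]
        have := h2 (i : ZMod n) ((i + 1 : ℕ) : ZMod n) (by
          rw [ZMod.val_natCast, ZMod.val_natCast, hm1]; omega)
        linarith
      · have hd1 : (i + 1) / n = i / n + 1 := by
          conv_lhs => rw [← e1]
          rw [show i % n + n * (i / n) + 1 = (i % n + 1) + n * (i / n) by ring,
            Nat.add_mul_div_left _ _ hn0, show i % n + 1 = n by omega, Nat.div_self hn0, add_comm]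
        rw [hd1]
        have a := (h1 (i : ZMod n)).2
        have b := (h1 ((i + 1 : ℕ) : ZMod n)).1
        push_cast at b ⊢
        linarith
    · have := (h1 0).1
      simpa using this
    · beta_reduce
      rw [Nat.div_eq_of_lt (by omega : n - 1 < n)]
      simpa using (h1 ((n - 1 : ℕ) : ZMod n)).2
    · ext x
      simp only [Set.mem_range, Set.mem_image, Set.mem_Iio]
      constructor
      · rintro ⟨y, rfl⟩
        refine ⟨y.val, ZMod.val_lt y, ?_⟩
        rw [Nat.div_eq_of_lt (ZMod.val_lt y)]
        simp
      · rintro ⟨i, hi, rfl⟩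
        refine ⟨i, ?_⟩
        rw [Nat.div_eq_of_lt hi]
        simp
  · rintro ⟨T, M, hS, hT, ⟨h0, h1⟩, rfl⟩
    have hIco : ∀ i, i < n → T i ∈ Set.Ico (0 : ℝ) 1 := by
      intro i hi
      exact ⟨h0.trans (hT.monotone (Nat.zero_le i)),
        (hT.monotone (by omega : i ≤ n - 1)).trans_lt h1⟩
    have hper : ∀ a b, T (a + n * b) = T a + (b : ℕ) := by
      intro a b
      induction b with
      | zero => simp
      | succ b ih =>
        rw [mul_add, mul_one, ← add_assoc, hS.hT, ih]
        push_cast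
        ring
    refine ⟨fun x => T x.val, ?_, ?_, ?_, ?_, ?_⟩
    · ext x
      simp only [Set.mem_range, Set.mem_image, Set.mem_Iio]
      constructor
      · rintro ⟨y, rfl⟩
        exact ⟨y.val, ZMod.val_lt y, rfl⟩
      · rintro ⟨i, hi, rfl⟩
        exact ⟨i, by rw [ZMod.val_natCast, Nat.mod_eq_of_lt hi]⟩
    · exact fun x => hIco _ (ZMod.val_lt x)
    · exact fun i j hij => hT hij
    · intro hc
      rw [ZMod.natCast_eq_zero_iff] at hc
      exact absurd (Nat.le_of_dvd hP0 hc) (by omega)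
    · intro x
      beta_reduce
      rw [ZMod.val_add, ZMod.val_natCast, Nat.mod_eq_of_lt hPn]
      unfold sigmad
      rw [hS.heq, Int.fract_add_intCast]
      have := hper ((x.val + P) % n) ((x.val + P) / n)
      rw [Nat.mod_add_div] at this
      rw [this, Int.fract_add_natCast, Int.fract_eq_self]
      exact hIco _ (Nat.mod_lt _ hn0)

theorem T_image_inj {n : ℕ} {T T' : ℕ → ℝ} (hT : StrictMono T) (hT' : StrictMono T')
    (hn : 0 < n) (hp : ∀ i, T (i + n) = T i + 1) (hp' : ∀ i, T' (i + n) = T' i + 1)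
    (h : T '' Set.Iio n = T' '' Set.Iio n) : T = T' := by
  have a : StrictMono (fun i : Fin n => T i) := fun i j hij => hT hij
  have a' : StrictMono (fun i : Fin n => T' i) := fun i j hij => hT' hij
  have r : ∀ S : ℕ → ℝ, Set.range (fun i : Fin n => S i) = S '' Set.Iio n := by
    intro S
    ext x
    constructor
    · rintro ⟨i, rfl⟩; exact ⟨i, i.2, rfl⟩
    · rintro ⟨i, hi, rfl⟩; exact ⟨⟨i, hi⟩, rfl⟩
  have e := (StrictMono.range_inj a a').1 (by rw [r, r, h])
  have hper : Function.Periodic (fun i => T i - T' i) n := by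
    intro i
    simp only [hp, hp']
    ring
  funext i
  have h1 := hper.map_mod_nat i
  have h2 := congrFun e ⟨i % n, Nat.mod_lt _ hn⟩
  linarith

theorem stmt14 (d q p : ℕ) (hd : 2 ≤ d) (hq : 2 ≤ q)
    (hp1 : 1 ≤ p) (hp2 : p ≤ q - 1) (hpq : Nat.gcd p q = 1) :
    ∀ k : ℕ, 1 ≤ k → k ≤ d - 1 →
      (countRotSets d q p k : ℤ) =
        ∑ j ∈ Finset.Icc 1 k,
          (-1 : ℤ) ^ (k + j) * ((k - 1).choose (j - 1) : ℤ) *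
            ((d - 2 + j * q).choose (d - 2) : ℤ) := by
  intro k hk _
  rw [← card_FF d k q hk]
  congr 1
  have hn : 0 < k * q := by positivity
  have hn2 : 2 ≤ k * q := by nlinarith
  have hP0 : 0 < k * p := by positivity
  have hPn : k * p < k * q := Nat.mul_lt_mul_of_pos_left (by omega) (by omega)
  have hex : ∀ f : ℕ → ℕ, ∃ T, RSol d (k * q) (k * p) T (Mof d (k * q) f) :=
    fun f => RSol.exists hd hn (Mof_period d (k * q) hn f)
  choose TT hTT using hex
  have hgood : ∀ f ∈ FF d k q, StrictMono (TT f) ∧ (0 ≤ TT f 0 ∧ TT f (k * q - 1) < 1) := by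
    intro f hf
    obtain ⟨hf1, hf2⟩ := mem_FF.1 hf
    have hs := (Finset.mem_piAntidiag.1 hf1).1
    have hsm := (hTT f).strictMono hd hn (Mof_mono d (k * q) hd hn f hs)
      ((strict_iff hd hk hq hpq f hs).2 hf2)
    refine ⟨hsm, ((hTT f).bounds hd hn2 hP0 hPn hsm).2 ⟨?_, ?_⟩⟩
    · rw [Mof_lt d _ f hn]; positivity
    · rw [Mof_last d _ hd hn f hs]; omega
  have hset : {A : Set ℝ | (∃ t : ZMod (k * q) → ℝ, Set.range t = A ∧
      IsRotational d (k * q) ((k * p : ℕ) : ZMod (k * q)) t) ∧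
      {O : Set ℝ | ∃ x ∈ A, O = sigmaOrbit d x}.ncard = k} =
      (fun f => TT f '' Set.Iio (k * q)) '' (FF d k q : Set (ℕ → ℕ)) := by
    ext A
    rw [Set.mem_ofPred_eq, Set.mem_image]
    constructor
    · rintro ⟨h, _⟩
      obtain ⟨T, M, hS, hT, hb, rfl⟩ := (rot_iff hn2 hP0 hPn A).1 h
      obtain ⟨hm, hst⟩ := hS.mono_of_strictMono hd hn2 hT
      obtain ⟨hb0, hb1⟩ := (hS.bounds hd hn2 hP0 hPn hT).1 hb
      obtain ⟨f, hf, rfl⟩ := exists_Mof hd hn hS.hM hm hb0 hb1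
      refine ⟨f, ?_, ?_⟩
      · rw [Finset.mem_coe, mem_FF]
        exact ⟨hf, (strict_iff hd hk hq hpq f (Finset.mem_piAntidiag.1 hf).1).1 hst⟩
      · rw [(hTT f).unique hd hn hS]
    · rintro ⟨f, hf, rfl⟩
      obtain ⟨g1, g2⟩ := hgood f hf
      have h := (rot_iff (d := d) hn2 hP0 hPn (TT f '' Set.Iio (k * q))).2
        ⟨TT f, _, hTT f, g1, g2, rfl⟩
      refine ⟨h, ?_⟩
      obtain ⟨t, ht, hr⟩ := h
      have := orbits_ncard hk hq hpq hr
      rwa [ht] at this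
  unfold countRotSets
  change Nat.card ↥{A : Set ℝ | _} = _
  rw [Nat.card_coe_set_eq, hset, Set.InjOn.ncard_image, Set.ncard_coe_finset]
  intro f hf g hg hfg
  have e : TT f = TT g := T_image_inj (hgood f hf).1 (hgood g hg).1 hn (hTT f).hT (hTT g).hT hfg
  have hf' := (mem_FF.1 hf).1
  have hg' := (mem_FF.1 hg).1
  refine Mof_inj hn hf' hg' ?_
  funext i
  have h1 := (hTT f).heq i
  have h2 := (hTT g).heq i
  rw [e] at h1
  have : (Mof d (k * q) f i : ℝ) = Mof d (k * q) g i := by linarith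
  exact_mod_cast this
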